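/- Fix β > 0, R > 0 and C > 0. Then there exist positive constants c = c(C, R, β) and N = N(C, R, β) with the following property. Let n ≥ N, let x₀ ∈ [0,1], let (Ω, 𝓐) be a measurable space and (P_f : f ∈ 𝒞^β(R)) a family of probability measures on (Ω, 𝓐) whose squared Hellinger distances satisfy H(P_f, P_g)² = 1 − exp(−(n/8)·‖f − g‖_{L²([0,1])}²) for all f, g ∈ 𝒞^β(R), and let T : Ω → ℝ be any measurable estimator of f(x₀) that is integrable under every P_f, with Med_f(T) denoting a median of T under P_f. If sup_{f ∈ 𝒞^β(R)} |Med_f(T) − f(x₀)| < (C/n)^{β/(2β+1)}, then sup_{f ∈ 𝒞^β(R)} E_{P_f}[|T − Med_f(T)|] ≥ c·n^{−β/(2β+1)}. -/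

import Mathlib

open MeasureTheory ENNReal

/-- The squared Hellinger distance `H(P,Q)²` between two measures on the same
measurable space, defined via the densities with respect to the dominating measure `P + Q`. -/
noncomputable def sqHellinger {Ω : Type*} [MeasurableSpace Ω] (P Q : Measure Ω) : ℝ :=
  (1 / 2) * ∫ ω, (Real.sqrt ((P.rnDeriv (P + Q) ω).toReal)
    - Real.sqrt ((Q.rnDeriv (P + Q) ω).toReal)) ^ 2 ∂(P + Q)

/-- `⌊β⌋`: the largest integer strictly smaller than `β` (for `β > 0`). -/
noncomputable def lfloor (β : ℝ) : ℕ := ⌈β⌉₊ - 1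

/-- The `β`-Hölder norm of `f` on the domain `[0,1]`, valued in `ℝ≥0∞`:
the sum over `ℓ = 0, …, ⌊β⌋` of the sup-norms of the `ℓ`-th derivatives plus the
`(β - ⌊β⌋)`-Hölder seminorm of the `⌊β⌋`-th derivative. -/
noncomputable def holderNorm (β : ℝ) (f : ℝ → ℝ) : ℝ≥0∞ :=
  (∑ l ∈ Finset.range (lfloor β + 1),
      ⨆ x : Set.Icc (0:ℝ) 1, ENNReal.ofReal |iteratedDerivWithin l f (Set.Icc 0 1) x|)
    + ⨆ p : {y : Set.Icc (0:ℝ) 1 × Set.Icc (0:ℝ) 1 // (y.1 : ℝ) ≠ (y.2 : ℝ)},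
        ENNReal.ofReal
          (|iteratedDerivWithin (lfloor β) f (Set.Icc 0 1) p.1.1
              - iteratedDerivWithin (lfloor β) f (Set.Icc 0 1) p.1.2|
            / |(p.1.1 : ℝ) - (p.1.2 : ℝ)| ^ (β - (lfloor β : ℝ)))

/-- The ball `𝒞^β(R)` of `β`-Hölder smooth functions on `[0,1]` with radius `R`. -/
def holderBall (β R : ℝ) : Set (ℝ → ℝ) :=
  {f | ContDiffOn ℝ (lfloor β) f (Set.Icc 0 1) ∧ holderNorm β f ≤ ENNReal.ofReal R}

lemma hell_aux {p q r : ℝ} (hp : 0 ≤ p) (hq : 0 ≤ q) (hr : 0 < r) :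
    (p + q) - (2 / r) * min p q - r / 2 * (p + q) ≤ (Real.sqrt p - Real.sqrt q) ^ 2 := by
  have key : ∀ a b : ℝ, 0 ≤ a → 0 ≤ b → 2 * (a * b) ≤ 2 / r * a ^ 2 + r / 2 * b ^ 2 := by
    intro a b _ _
    have h1 : 2 / r * a ^ 2 + r / 2 * b ^ 2 - 2 * (a * b) = (2 * a - r * b) ^ 2 / (2 * r) := by
      field_simp
      ring
    have h2 : 0 ≤ (2 * a - r * b) ^ 2 / (2 * r) := by positivity
    linarith
  have e1 := Real.sq_sqrt hp
  have e2 := Real.sq_sqrt hq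
  have n1 := Real.sqrt_nonneg p
  have n2 := Real.sqrt_nonneg q
  rcases le_total p q with h | h
  · rw [min_eq_left h]
    have := key _ _ n1 n2
    rw [e1, e2] at this
    have h3 : 0 ≤ r / 2 * p := by positivity
    nlinarith
  · rw [min_eq_right h]
    have := key _ _ n2 n1
    rw [e1, e2] at this
    have h3 : 0 ≤ r / 2 * q := by positivity
    nlinarith

lemma hell_main {Ω : Type*} [MeasurableSpace Ω] (P Q : Measure Ω) [IsProbabilityMeasure P]
    [IsProbabilityMeasure Q] {r : ℝ} (hr : 0 < r) (h : sqHellinger P Q = 1 - r)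
    (T : Ω → ℝ) (hTP : Integrable T P) (hTQ : Integrable T Q) (a b : ℝ) :
    r ^ 2 / 2 * |a - b| ≤ ∫ ω, |T ω - a| ∂P + ∫ ω, |T ω - b| ∂Q := by
  have hPm : P ≪ P + Q := Measure.AbsolutelyContinuous.rfl.add_right Q
  have hQm : Q ≪ P + Q := by
    rw [add_comm]; exact Measure.AbsolutelyContinuous.rfl.add_right P
  unfold sqHellinger at h
  set μ := P + Q with hμ
  set p : Ω → ℝ := fun ω => (P.rnDeriv μ ω).toReal with hp
  set q : Ω → ℝ := fun ω => (Q.rnDeriv μ ω).toReal with hq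
  have p0 : ∀ ω, 0 ≤ p ω := fun ω => ENNReal.toReal_nonneg
  have q0 : ∀ ω, 0 ≤ q ω := fun ω => ENNReal.toReal_nonneg
  have pm : Measurable p := (Measure.measurable_rnDeriv P μ).ennreal_toReal
  have qm : Measurable q := (Measure.measurable_rnDeriv Q μ).ennreal_toReal
  have ip : Integrable p μ := Measure.integrable_toReal_rnDeriv
  have iq : Integrable q μ := Measure.integrable_toReal_rnDeriv
  have ep : ∫ ω, p ω ∂μ = 1 := by
    rw [Measure.integral_toReal_rnDeriv hPm]; simp
  have eq : ∫ ω, q ω ∂μ = 1 := by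
    rw [Measure.integral_toReal_rnDeriv hQm]; simp
  have im : Integrable (fun ω => min (p ω) (q ω)) μ := ip.inf iq
  have ih : Integrable (fun ω => (Real.sqrt (p ω) - Real.sqrt (q ω)) ^ 2) μ := by
    refine (ip.add iq).mono' (by fun_prop) (ae_of_all _ fun ω => ?_)
    have e1 := Real.sq_sqrt (p0 ω)
    have e2 := Real.sq_sqrt (q0 ω)
    have n1 := Real.sqrt_nonneg (p ω)
    have n2 := Real.sqrt_nonneg (q ω)
    rw [Real.norm_of_nonneg (sq_nonneg _)]
    simp only [Pi.add_apply]
    nlinarith [mul_nonneg n1 n2]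
  have hm : r ^ 2 / 2 ≤ ∫ ω, min (p ω) (q ω) ∂μ := by
    have h1 : ∫ ω, ((p ω + q ω) - (2 / r) * min (p ω) (q ω) - r / 2 * (p ω + q ω)) ∂μ
        ≤ ∫ ω, (Real.sqrt (p ω) - Real.sqrt (q ω)) ^ 2 ∂μ := by
      refine integral_mono (((ip.add iq).sub (im.const_mul _)).sub ((ip.add iq).const_mul _)) ih
        fun ω => hell_aux (p0 ω) (q0 ω) hr
    have ipq : Integrable (fun ω => p ω + q ω) μ := ip.add iq
    have i2 : Integrable (fun ω => p ω + q ω - 2 / r * min (p ω) (q ω)) μ :=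
      ipq.sub (im.const_mul _)
    rw [integral_sub i2 (ipq.const_mul _),
      integral_sub ipq (im.const_mul _), integral_const_mul, integral_const_mul,
      integral_add ip iq, ep, eq] at h1
    have h2 : r ≤ 2 / r * ∫ ω, min (p ω) (q ω) ∂μ := by linarith
    have h3 : r * r ≤ r * (2 / r * ∫ ω, min (p ω) (q ω) ∂μ) :=
      mul_le_mul_of_nonneg_left h2 hr.le
    have h4 : r * (2 / r * ∫ ω, min (p ω) (q ω) ∂μ) = 2 * ∫ ω, min (p ω) (q ω) ∂μ := by
      field_simp
    nlinarith
  have jP : Integrable (fun ω => p ω * |T ω - a|) μ :=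
    (integrable_toReal_rnDeriv_mul_iff hPm).2 (hTP.sub (integrable_const a)).abs
  have jQ : Integrable (fun ω => q ω * |T ω - b|) μ :=
    (integrable_toReal_rnDeriv_mul_iff hQm).2 (hTQ.sub (integrable_const b)).abs
  rw [← integral_toReal_rnDeriv_mul hPm, ← integral_toReal_rnDeriv_mul hQm,
    ← integral_add jP jQ]
  calc r ^ 2 / 2 * |a - b| ≤ (∫ ω, min (p ω) (q ω) ∂μ) * |a - b| := by gcongr
    _ = ∫ ω, min (p ω) (q ω) * |a - b| ∂μ := (integral_mul_const _ _).symm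
    _ ≤ _ := by
      refine integral_mono (im.mul_const _) (jP.add jQ) fun ω => ?_
      have t : |a - b| ≤ |T ω - a| + |T ω - b| := by
        have := abs_sub_le a (T ω) b
        rwa [abs_sub_comm a (T ω)] at this
      have m0 : 0 ≤ min (p ω) (q ω) := le_min (p0 ω) (q0 ω)
      calc min (p ω) (q ω) * |a - b| ≤ min (p ω) (q ω) * (|T ω - a| + |T ω - b|) := by gcongr
        _ = min (p ω) (q ω) * |T ω - a| + min (p ω) (q ω) * |T ω - b| := mul_add _ _ _
        _ ≤ _ := add_le_add (mul_le_mul_of_nonneg_right (min_le_left _ _) (abs_nonneg _))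
            (mul_le_mul_of_nonneg_right (min_le_right _ _) (abs_nonneg _))

lemma exists_bump : ∃ φ : ℝ → ℝ, ContDiff ℝ (⊤ : ℕ∞) φ ∧ φ 0 = 1 ∧
    Integrable (fun x => φ x ^ 2) ∧
    ∃ M : ℕ → ℝ, (∀ l, 0 ≤ M l) ∧ ∀ l x, |iteratedDeriv l φ x| ≤ M l := by
  let f : ContDiffBump (0:ℝ) := ⟨1, 2, one_pos, one_lt_two⟩
  have hf : ContDiff ℝ (⊤ : ℕ∞) f := f.contDiff
  have hc : HasCompactSupport f := f.hasCompactSupport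
  refine ⟨f, hf, f.one_of_mem_closedBall (by simp [f]), ?_, ?_⟩
  · refine Continuous.integrable_of_hasCompactSupport (hf.continuous.pow 2) ?_
    exact hc.comp_left (g := fun y : ℝ => y ^ 2) (by simp)
  · have : ∀ l, ∃ B : ℝ, ∀ x, |iteratedDeriv l f x| ≤ B := by
      intro l
      obtain ⟨B, hB⟩ := (hc.iteratedFDeriv (𝕜 := ℝ) l).exists_bound_of_continuous
        (hf.continuous_iteratedFDeriv (m := l) (by exact_mod_cast le_top))
      refine ⟨B, fun x => ?_⟩
      rw [← Real.norm_eq_abs, ← norm_iteratedFDeriv_eq_norm_iteratedDeriv]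
      exact hB x
    choose M hM using this
    exact ⟨M, fun l => (abs_nonneg _).trans (hM l 0), hM⟩

lemma lfloor_lt {β : ℝ} (hβ : 0 < β) : (lfloor β : ℝ) < β ∧ β - lfloor β ≤ 1 := by
  unfold lfloor
  have h1 : 1 ≤ ⌈β⌉₊ := Nat.ceil_pos.2 hβ
  rw [Nat.cast_sub h1]
  have := Nat.ceil_lt_add_one hβ.le
  have := Nat.le_ceil β
  push_cast
  constructor <;> linarith

lemma holder_of_bounds {ψ : ℝ → ℝ} {M₀ M₁ γ : ℝ} (hd : Differentiable ℝ ψ) (hM₀ : 0 ≤ M₀)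
    (hM₁ : 0 ≤ M₁)
    (h0 : ∀ x, |ψ x| ≤ M₀) (h1 : ∀ x, |deriv ψ x| ≤ M₁) (hγ : 0 < γ) (hγ1 : γ ≤ 1) (u v : ℝ) :
    |ψ u - ψ v| ≤ (2 * M₀ + M₁) * |u - v| ^ γ := by
  have hr : 0 ≤ |u - v| ^ γ := by positivity
  rcases le_total (|u - v|) 1 with h | h
  · have a1 : ‖ψ u - ψ v‖ ≤ M₁ * ‖u - v‖ :=
      Convex.norm_image_sub_le_of_norm_deriv_le (s := Set.univ) (fun x _ => hd x)
        (fun x _ => h1 x) convex_univ trivial trivial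
    simp only [Real.norm_eq_abs] at a1
    have a2 : |u - v| ≤ |u - v| ^ γ := by
      rcases eq_or_lt_of_le (abs_nonneg (u - v)) with h0 | h0
      · rw [← h0]; positivity
      · simpa using Real.rpow_le_rpow_of_exponent_ge h0 h hγ1
    nlinarith [mul_nonneg hM₀ hr]
  · have a2 : 1 ≤ |u - v| ^ γ := Real.one_le_rpow h hγ.le
    have a1 : |ψ u - ψ v| ≤ |ψ u| + |ψ v| := abs_sub _ _
    have := h0 u
    have := h0 v
    nlinarith [mul_nonneg hM₁ hr]

lemma mem_ball {φ : ℝ → ℝ} (hφ : ContDiff ℝ (⊤ : ℕ∞) φ) {M : ℕ → ℝ} (hM0 : ∀ l, 0 ≤ M l)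
    (hM : ∀ l x, |iteratedDeriv l φ x| ≤ M l) {β R A h x₀ : ℝ} (hβ : 0 < β)
    (hA : 0 ≤ A) (hh : 0 < h) (hh1 : h ≤ 1)
    (hS : A * (∑ l ∈ Finset.range (lfloor β + 1), M l
      + (2 * M (lfloor β) + M (lfloor β + 1))) ≤ R * h ^ β) :
    (fun x => A * φ (h⁻¹ * (x - x₀))) ∈ holderBall β R := by
  have hφ' : ∀ l : ℕ, ContDiff ℝ l φ := fun l => hφ.of_le (by exact_mod_cast le_top)
  have hcd : ∀ l : ℕ, ContDiff ℝ l (fun x => A * φ (h⁻¹ * (x - x₀))) := by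
    intro l
    have := hφ' l
    fun_prop
  have hder : ∀ (l : ℕ) (x : ℝ), x ∈ Set.Icc (0:ℝ) 1 →
      iteratedDerivWithin l (fun x => A * φ (h⁻¹ * (x - x₀))) (Set.Icc 0 1) x
        = A * (h⁻¹ ^ l * iteratedDeriv l φ (h⁻¹ * (x - x₀))) := by
    intro l x hx
    rw [iteratedDerivWithin_eq_iteratedDeriv (uniqueDiffOn_Icc one_pos) (hcd l).contDiffAt hx,
      iteratedDeriv_const_mul_field]
    have := congrFun (iteratedDeriv_comp_sub_const l (fun y => φ (h⁻¹ * y)) x₀) x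
    rw [this, iteratedDeriv_comp_const_mul (hφ' l)]
  obtain ⟨hk, hk1⟩ := lfloor_lt hβ
  set k := lfloor β with hkdef
  have hb : 0 < h ^ (-β) := Real.rpow_pos_of_pos hh _
  have hpow : ∀ l ∈ Finset.range (k + 1), h⁻¹ ^ l ≤ h ^ (-β) := by
    intro l hl
    have : (l : ℝ) ≤ k := by exact_mod_cast Nat.lt_succ_iff.1 (Finset.mem_range.1 hl)
    rw [← Real.rpow_natCast, Real.inv_rpow hh.le, ← Real.rpow_neg hh.le]
    exact Real.rpow_le_rpow_of_exponent_ge hh hh1 (by linarith)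
  refine ⟨(hcd _).contDiffOn, ?_⟩
  unfold holderNorm
  rw [← hkdef]
  have L0 : 0 ≤ 2 * M k + M (k + 1) := by linarith [hM0 k, hM0 (k+1)]
  calc _ ≤ (∑ l ∈ Finset.range (k + 1), ENNReal.ofReal (A * h ^ (-β) * M l))
        + ENNReal.ofReal (A * h ^ (-β) * (2 * M k + M (k + 1))) := by
        refine add_le_add (Finset.sum_le_sum fun l hl => ?_) ?_
        · refine iSup_le fun x => ENNReal.ofReal_le_ofReal ?_
          rw [hder l x x.2, abs_mul, abs_mul, abs_of_nonneg hA, abs_of_nonneg (by positivity),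
            mul_assoc]
          gcongr
          · exact hpow l hl
          · exact hM l _
        · refine iSup_le fun p => ENNReal.ofReal_le_ofReal ?_
          obtain ⟨⟨x, y⟩, hxy⟩ := p
          simp only at hxy ⊢
          rw [hder k x x.2, hder k y y.2]
          have hne : 0 < |(x : ℝ) - y| := abs_pos.2 (sub_ne_zero.2 hxy)
          rw [div_le_iff₀ (Real.rpow_pos_of_pos hne _), ← mul_sub, ← mul_sub, abs_mul, abs_mul,
            abs_of_nonneg hA, abs_of_nonneg (by positivity : 0 ≤ h⁻¹ ^ k)]
          have hh' := holder_of_bounds (ψ := iteratedDeriv k φ) (M₀ := M k) (M₁ := M (k+1))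
            (γ := β - k)
            ((hφ' (k+1)).differentiable_iteratedDeriv k (by exact_mod_cast Nat.lt_succ_self k))
            (hM0 _) (hM0 _) (hM k)
            (fun x => by rw [← iteratedDeriv_succ]; exact hM _ x) (by linarith) hk1
            (h⁻¹ * (x - x₀)) (h⁻¹ * (y - x₀))
          have e1 : h⁻¹ * ((x:ℝ) - x₀) - h⁻¹ * (y - x₀) = h⁻¹ * (x - y) := by ring
          rw [e1, abs_mul, abs_of_pos (inv_pos.2 hh),
            Real.mul_rpow (inv_pos.2 hh).le hne.le] at hh'
          have e2 : h⁻¹ ^ k * h⁻¹ ^ (β - k) = h ^ (-β) := by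
            rw [← Real.rpow_natCast, ← Real.rpow_add (inv_pos.2 hh), Real.inv_rpow hh.le,
              ← Real.rpow_neg hh.le]
            congr 1; ring
          calc _ ≤ A * (h⁻¹ ^ k * ((2 * M k + M (k + 1)) *
                (h⁻¹ ^ (β - k) * |(x:ℝ) - y| ^ (β - k)))) := by gcongr
            _ = A * (h⁻¹ ^ k * h⁻¹ ^ (β - k)) * (2 * M k + M (k + 1))
                * |(x:ℝ) - y| ^ (β - k) := by ring
            _ = _ := by rw [e2]
    _ = ENNReal.ofReal (A * h ^ (-β) * (∑ l ∈ Finset.range (k + 1), M l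
          + (2 * M k + M (k + 1)))) := by
        rw [← ENNReal.ofReal_sum_of_nonneg (fun l _ => mul_nonneg (by positivity) (hM0 l)),
          ← ENNReal.ofReal_add (Finset.sum_nonneg fun l _ => mul_nonneg (by positivity) (hM0 l))
            (by positivity), ← Finset.mul_sum, ← mul_add]
    _ ≤ ENNReal.ofReal R := by
        refine ENNReal.ofReal_le_ofReal ?_
        have := mul_le_mul_of_nonneg_right hS hb.le
        rw [mul_assoc R, ← Real.rpow_add hh] at this
        simp only [add_neg_cancel, Real.rpow_zero, mul_one] at this
        linarith

/- `Med f` is a median of `T` under `P f`; the suprema over the Hölder ball in the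
hypothesis and the conclusion are formalized pointwise resp. existentially. -/
theorem stmt14 (β R C : ℝ) (hβ : 0 < β) (hR : 0 < R) (hC : 0 < C) :
    ∃ c N : ℝ, 0 < c ∧ 0 < N ∧
      ∀ (n : ℝ), N ≤ n →
        ∀ x₀ ∈ Set.Icc (0:ℝ) 1,
          ∀ (Ω : Type) (_ : MeasurableSpace Ω) (P : (ℝ → ℝ) → Measure Ω),
            (∀ f ∈ holderBall β R, IsProbabilityMeasure (P f)) →
            (∀ f ∈ holderBall β R, ∀ g ∈ holderBall β R,
              sqHellinger (P f) (P g)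
                = 1 - Real.exp (-(n / 8) * ∫ x in Set.Icc (0:ℝ) 1, (f x - g x) ^ 2)) →
            ∀ T : Ω → ℝ, Measurable T →
              (∀ f ∈ holderBall β R, Integrable T (P f)) →
              ∀ Med : (ℝ → ℝ) → ℝ,
                (∀ f ∈ holderBall β R,
                  (1 / 2 : ℝ≥0∞) ≤ P f {ω | T ω ≤ Med f}
                    ∧ (1 / 2 : ℝ≥0∞) ≤ P f {ω | Med f ≤ T ω}) →
                (∀ f ∈ holderBall β R,
                  |Med f - f x₀| < (C / n) ^ (β / (2 * β + 1))) →
                ∃ f ∈ holderBall β R,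
                  c * n ^ (-(β / (2 * β + 1))) ≤ ∫ ω, |T ω - Med f| ∂(P f) := by
  obtain ⟨φ, hφ, hφ0, hφi, M, hM0, hM⟩ := exists_bump
  set S : ℝ := ∑ l ∈ Finset.range (lfloor β + 1), M l
      + (2 * M (lfloor β) + M (lfloor β + 1)) with hS
  have hS0 : 0 ≤ S := by
    have := Finset.sum_nonneg (s := Finset.range (lfloor β + 1)) (fun l _ => hM0 l)
    linarith [hM0 (lfloor β), hM0 (lfloor β + 1)]
  set e : ℝ := β / (2 * β + 1) with he
  set I : ℝ := ∫ x, φ x ^ 2 with hI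
  have hI0 : 0 ≤ I := integral_nonneg fun x => sq_nonneg _
  have hCe : 0 < C ^ e := Real.rpow_pos_of_pos hC _
  set K : ℝ := (4 * C ^ e * (S + 1) / R) ^ (1 / β) with hK
  have hKβ : K ^ β = 4 * C ^ e * (S + 1) / R := by
    rw [hK, ← Real.rpow_mul (by positivity), one_div_mul_cancel hβ.ne', Real.rpow_one]
  have hK0 : 0 < K := by positivity
  set D : ℝ := 16 * (C ^ e) ^ 2 * K * I with hD
  set r0 : ℝ := Real.exp (-(D / 8)) with hr0
  have hr0p : 0 < r0 := Real.exp_pos _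
  refine ⟨r0 ^ 2 * C ^ e / 2, max 1 (K ^ (2 * β + 1)), by positivity, by positivity, ?_⟩
  intro n hn x₀ hx₀ Ω _ P hP hH T hT hTi Med _ hMed
  have hn1 : 1 ≤ n := (le_max_left _ _).trans hn
  have hn2 : K ^ (2 * β + 1) ≤ n := (le_max_right _ _).trans hn
  have hn0 : 0 < n := by linarith
  set h : ℝ := K * n ^ (-(1 / (2 * β + 1))) with hh
  have hh0 : 0 < h := by positivity
  have hh1 : h ≤ 1 := by
    rw [hh, Real.rpow_neg hn0.le, ← div_eq_mul_inv, div_le_one (by positivity)]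
    calc K = (K ^ (2 * β + 1)) ^ (1 / (2 * β + 1)) := by
          rw [← Real.rpow_mul hK0.le, mul_one_div_cancel (by positivity), Real.rpow_one]
      _ ≤ _ := Real.rpow_le_rpow (by positivity) hn2 (by positivity)
  have hne : 0 < n ^ (-e) := Real.rpow_pos_of_pos hn0 _
  have ha : (C / n) ^ e = C ^ e * n ^ (-e) := by
    rw [Real.div_rpow hC.le hn0.le, Real.rpow_neg hn0.le, div_eq_mul_inv]
  set A : ℝ := 4 * (C ^ e * n ^ (-e)) with hA
  have hA0 : 0 ≤ A := by positivity
  have hhβ : R * h ^ β = A * (S + 1) := by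
    rw [hh, Real.mul_rpow hK0.le (by positivity), hKβ, ← Real.rpow_mul hn0.le, hA]
    have : -(1 / (2 * β + 1)) * β = -e := by rw [he]; ring
    rw [this]
    field_simp
  have hg := mem_ball (x₀ := x₀) (R := R) hφ hM0 hM hβ hA0 hh0 hh1 (by rw [hhβ]; nlinarith)
  have hf := mem_ball (x₀ := x₀) (R := R) hφ hM0 hM hβ le_rfl hh0 hh1
    (by rw [zero_mul]; positivity)
  set g : ℝ → ℝ := fun x => A * φ (h⁻¹ * (x - x₀)) with hgdef
  set f : ℝ → ℝ := fun x => 0 * φ (h⁻¹ * (x - x₀)) with hfdef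
  have mf := hMed f hf
  have mg := hMed g hg
  have hf0 : f x₀ = 0 := by simp [hfdef]
  have hg0 : g x₀ = A := by simp [hgdef, hφ0]
  rw [hf0, ha] at mf
  rw [hg0, ha] at mg
  have hsep : 2 * (C ^ e * n ^ (-e)) ≤ |Med f - Med g| := by
    rw [abs_lt] at mf mg
    rw [abs_sub_comm]
    refine le_trans ?_ (le_abs_self _)
    linarith [mf.2, mg.1]
  have hL2 : ∫ x in Set.Icc (0:ℝ) 1, (f x - g x) ^ 2 ≤ A ^ 2 * (h * I) := by
    have e1 : ∀ x, (f x - g x) ^ 2 = A ^ 2 * φ (h⁻¹ * (x - x₀)) ^ 2 := by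
      intro x; simp only [hfdef, hgdef]; ring
    simp_rw [e1]
    have hi : Integrable (fun x => A ^ 2 * φ (h⁻¹ * (x - x₀)) ^ 2) := by
      have := (hφi.comp_mul_left' (inv_ne_zero hh0.ne')).comp_sub_right x₀
      exact this.const_mul _
    refine (setIntegral_le_integral hi (ae_of_all _ fun x => by positivity)).trans (le_of_eq ?_)
    rw [integral_const_mul]
    congr 1
    rw [integral_sub_right_eq_self (fun x => φ (h⁻¹ * x) ^ 2) x₀,
      Measure.integral_comp_mul_left (fun x => φ x ^ 2) h⁻¹]
    simp [abs_of_pos hh0, hI]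
  have hnD : n * (A ^ 2 * (h * I)) = D := by
    have e1 : n * (n ^ (-e)) ^ 2 * n ^ (-(1 / (2 * β + 1))) = 1 := by
      rw [← Real.rpow_natCast, ← Real.rpow_mul hn0.le]
      nth_rewrite 1 [← Real.rpow_one n]
      rw [← Real.rpow_add hn0, ← Real.rpow_add hn0]
      have : 1 + -e * ((2:ℕ):ℝ) + -(1 / (2 * β + 1)) = 0 := by
        rw [he]; push_cast; field_simp; ring
      rw [this, Real.rpow_zero]
    calc n * (A ^ 2 * (h * I))
        = 16 * (C ^ e) ^ 2 * K * I * (n * (n ^ (-e)) ^ 2 * n ^ (-(1 / (2 * β + 1)))) := by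
          rw [hA, hh]; ring
      _ = D := by rw [e1, mul_one]
  have hell := hH f hf g hg
  set r : ℝ := Real.exp (-(n / 8) * ∫ x in Set.Icc (0:ℝ) 1, (f x - g x) ^ 2) with hr
  have hr0r : r0 ≤ r := by
    refine Real.exp_le_exp.2 ?_
    have := mul_le_mul_of_nonneg_left hL2 hn0.le
    linarith
  haveI := hP f hf
  haveI := hP g hg
  have main := hell_main (P f) (P g) (Real.exp_pos _) hell T (hTi f hf) (hTi g hg)
    (Med f) (Med g)
  have low : r0 ^ 2 * (C ^ e * n ^ (-e)) ≤ r ^ 2 / 2 * |Med f - Med g| := by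
    calc r0 ^ 2 * (C ^ e * n ^ (-e)) = r0 ^ 2 / 2 * (2 * (C ^ e * n ^ (-e))) := by ring
      _ ≤ _ := by gcongr
  by_cases hc : r0 ^ 2 * C ^ e / 2 * n ^ (-e) ≤ ∫ ω, |T ω - Med f| ∂(P f)
  · exact ⟨f, hf, hc⟩
  · refine ⟨g, hg, ?_⟩
    push Not at hc
    linarith
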